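/- With O2 = x y ∂_x + y² ∂_y + (1/2) y q ∂_q + (i/2) x q² + y and D_s = i q ∂_y − ∂_x ∂_q, one has the operator identity [D_s, O2] = (3/2) y ∘ D_s (composition of multiplication by (3/2)y with D_s); equivalently D_s ∘ O2 = (O2 + (3/2) y) ∘ D_s. In particular O2 preserves the kernel of D_s. -/

import Mathlib

open MvPolynomial Complex

noncomputable section

/-- The space of complex polynomials in three variables `x = X 0`, `y = X 1`, `q = X 2`. -/
abbrev V : Type := MvPolynomial (Fin 3) ℂ

/-- Partial derivative `∂_x`. -/
def Dx : Module.End ℂ V := (pderiv (0 : Fin 3)).toLinearMap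
/-- Partial derivative `∂_y`. -/
def Dy : Module.End ℂ V := (pderiv (1 : Fin 3)).toLinearMap
/-- Partial derivative `∂_q`. -/
def Dq : Module.End ℂ V := (pderiv (2 : Fin 3)).toLinearMap
/-- Multiplication by `x`. -/
def Mx : Module.End ℂ V := LinearMap.mulLeft ℂ (X 0)
/-- Multiplication by `y`. -/
def My : Module.End ℂ V := LinearMap.mulLeft ℂ (X 1)
/-- Multiplication by `q`. -/
def Mq : Module.End ℂ V := LinearMap.mulLeft ℂ (X 2)

/-- `X = -y ∂_x - (i/2) q²`. -/
def opX : Module.End ℂ V := -(My * Dx) - (I / 2) • (Mq * Mq)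
/-- `H = -x ∂_x + y ∂_y + q ∂_q + 1/2`. -/
def opH : Module.End ℂ V := -(Mx * Dx) + My * Dy + Mq * Dq + (1 / 2 : ℂ) • 1
/-- `Y = -x ∂_y - (i/2) ∂_q²`. -/
def opY : Module.End ℂ V := -(Mx * Dy) - (I / 2) • (Dq * Dq)
/-- `E = x ∂_x + y ∂_y + 1/2`. -/
def opE : Module.End ℂ V := Mx * Dx + My * Dy + (1 / 2 : ℂ) • 1
/-- The symplectic Dirac operator `D_s = i q ∂_y - ∂_x ∂_q`. -/
def Ds : Module.End ℂ V := I • (Mq * Dy) - Dx * Dq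
/-- `X_s = y ∂_q + i x q`. -/
def Xs : Module.End ℂ V := My * Dq + I • (Mx * Mq)
/-- `O1 = x² ∂_x + x y ∂_y - (1/2) x q ∂_q + (i/2) y ∂_q² + (1/2) x`. -/
def opO1 : Module.End ℂ V :=
  Mx * Mx * Dx + Mx * My * Dy - (1 / 2 : ℂ) • (Mx * Mq * Dq) + (I / 2) • (My * Dq * Dq)
    + (1 / 2 : ℂ) • Mx
/-- `O2 = x y ∂_x + y² ∂_y + (1/2) y q ∂_q + (i/2) x q² + y`. -/
def opO2 : Module.End ℂ V :=
  Mx * My * Dx + My * My * Dy + (1 / 2 : ℂ) • (My * Mq * Dq) + (I / 2) • (Mx * Mq * Mq) + My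

/-!
`O2` is `y (𝓔 + 1) + (i/2) x q²`, where `𝓔 = x ∂_x + y ∂_y + (1/2) q ∂_q` is the Euler derivation of
weights `(1, 1, 1/2)`. The two terms of `D_s` have weights `-1/2` and `-3/2` under `𝓔`, so commuting
`D_s` past `𝓔` gives `(3/2) D_s` up to the error `-i q ∂_y`. That error, multiplied by `y`, is
cancelled by the Leibniz terms that arise when `D_s` is moved past the multiplications by `y` and
`x q²`.
-/

theorem derivation_sum_apply {R A M ι : Type*} [CommSemiring R] [CommSemiring A] [AddCommMonoid M]
    [Algebra R A] [Module R M] [Module A M] (s : Finset ι) (D : ι → Derivation R A M) (a : A) :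
    (∑ i ∈ s, D i) a = ∑ i ∈ s, D i a := by
  rw [← Derivation.coeFnAddMonoidHom_apply, map_sum, Finset.sum_apply]
  rfl

section WeightedEuler

variable {R σ : Type*}

section CommSemiring

variable [CommSemiring R]

/-- The Euler derivation `∑ i, w i • X i * ∂_i` with weights `w`, which multiplies each monomial by
its weight. It is encoded by its values on the variables, so that `σ` may be infinite. -/
def weightedEuler (w : σ → R) : Derivation R (MvPolynomial σ R) (MvPolynomial σ R) :=
  mkDerivation R fun i => w i • X i

theorem weightedEuler_X (w : σ → R) (i : σ) : weightedEuler w (X i) = w i • X i :=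
  mkDerivation_X R _ i

theorem weightedEuler_apply [Fintype σ] (w : σ → R) (p : MvPolynomial σ R) :
    weightedEuler w p = ∑ i, w i • (X i * pderiv i p) := by
  have h : weightedEuler w = ∑ i, w i • (X i : MvPolynomial σ R) • pderiv i := by
    classical
    refine derivation_ext fun j => ?_
    simp [derivation_sum_apply, weightedEuler_X, pderiv_X, Pi.single_apply]
  simp [h, derivation_sum_apply]

end CommSemiring

section CommRing

variable [CommRing R]

theorem lie_pderiv_weightedEuler (w : σ → R) (i : σ) :
    ⁅pderiv (R := R) i, weightedEuler w⁆ = w i • pderiv i := by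
  classical
  refine derivation_ext fun j => ?_
  rcases eq_or_ne j i with rfl | hji
  · simp [Derivation.commutator_apply, weightedEuler_X]
  · simp [Derivation.commutator_apply, weightedEuler_X, pderiv_X_of_ne hji]

theorem pderiv_weightedEuler (w : σ → R) (i : σ) (p : MvPolynomial σ R) :
    pderiv i (weightedEuler w p) = weightedEuler w (pderiv i p) + w i • pderiv i p := by
  rw [← sub_eq_iff_eq_add', ← Derivation.commutator_apply, lie_pderiv_weightedEuler,
    Derivation.smul_apply]

end CommRing

end WeightedEuler

theorem Ds_apply (p : V) :
    Ds p = I • (X 2 * pderiv 1 p) - pderiv 0 (pderiv 2 p) :=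
  rfl

theorem Ds_mul (f g : V) :
    Ds (f * g) =
      f * Ds g + Ds f * g - pderiv 0 f * pderiv 2 g - pderiv 2 f * pderiv 0 g := by
  simp only [Ds_apply, pderiv_mul, map_add, smul_eq_C_mul]
  ring

theorem Ds_weightedEuler (w : Fin 3 → ℂ) (p : V) :
    Ds (weightedEuler w p) = weightedEuler w (Ds p)
      + ((w 1 - w 2) * I) • (X 2 * pderiv 1 p) - (w 0 + w 2) • pderiv 0 (pderiv 2 p) := by
  simp only [Ds_apply, pderiv_weightedEuler, map_add, map_sub, Derivation.map_smul,
    Derivation.leibniz, weightedEuler_X, smul_eq_mul]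
  -- As opaque atoms, the derivatives are not unfolded when `algebra` compares them.
  generalize pderiv 0 (pderiv 2 p) = pxq, pderiv 1 p = py
  algebra

/-- The weights `(1, 1, 1/2)` of `x`, `y`, `q` for which `O2 - (i/2) x q²` is `y` times a shifted
Euler derivation. -/
def weightO2 : Fin 3 → ℂ := ![1, 1, 1 / 2]

theorem opO2_apply (p : V) :
    opO2 p = X 1 * (weightedEuler weightO2 p + p) + (I / 2) • (X 0 * X 2 ^ 2 * p) := by
  have h : opO2 p = X 0 * (X 1 * pderiv 0 p) + X 1 * (X 1 * pderiv 1 p)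
      + (1 / 2 : ℂ) • (X 1 * (X 2 * pderiv 2 p)) + (I / 2) • (X 0 * (X 2 * (X 2 * p)))
      + X 1 * p := rfl
  simp only [h, weightedEuler_apply, weightO2, Fin.sum_univ_three, Matrix.cons_val]
  generalize pderiv 0 p = px, pderiv 1 p = py, pderiv 2 p = pq
  algebra

theorem Ds_weightedEuler_weightO2 (p : V) :
    Ds (weightedEuler weightO2 p) = weightedEuler weightO2 (Ds p)
      + (3 / 2 : ℂ) • Ds p - I • (X 2 * pderiv 1 p) := by
  simp only [Ds_weightedEuler, weightO2, Matrix.cons_val, Ds_apply p]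
  module

theorem Ds_X_one_mul (p : V) : Ds (X 1 * p) = X 1 * Ds p + I • (X 2 * p) := by
  have hDs : Ds (X 1) = I • X 2 := by simp [Ds_apply]
  simp [Ds_mul, hDs]

theorem Ds_X_zero_mul_X_two_sq_mul (p : V) :
    Ds (X 0 * X 2 ^ 2 * p) = X 0 * X 2 ^ 2 * Ds p
      - (2 : ℂ) • (X 2 * (p + X 0 * pderiv 0 p)) - X 2 ^ 2 * pderiv 2 p := by
  have hx : pderiv 0 (X 0 * X 2 ^ 2 : V) = X 2 ^ 2 := by simp
  have hy : pderiv 1 (X 0 * X 2 ^ 2 : V) = 0 := by simp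
  have hq : pderiv 2 (X 0 * X 2 ^ 2 : V) = (2 : ℂ) • (X 0 * X 2) := by
    rw [pderiv_mul, pderiv_pow, pderiv_X_self, pderiv_X_of_ne (by decide)]
    algebra
  have hDs : Ds (X 0 * X 2 ^ 2) = -((2 : ℂ) • X 2) := by
    rw [Ds_apply, hy, hq, Derivation.map_smul]
    simp
  rw [Ds_mul, hDs, hx, hq]
  algebra

theorem smul_X_two_mul_weightedEuler_weightO2_add_self (p : V) :
    I • (X 2 * (weightedEuler weightO2 p + p)) = I • (X 1 * (X 2 * pderiv 1 p))
      + (I / 2) • ((2 : ℂ) • (X 2 * (p + X 0 * pderiv 0 p)) + X 2 ^ 2 * pderiv 2 p) := by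
  simp only [weightedEuler_apply, weightO2, Fin.sum_univ_three, Matrix.cons_val]
  generalize pderiv 0 p = px, pderiv 1 p = py, pderiv 2 p = pq
  algebra

theorem Ds_opO2 (p : V) : Ds (opO2 p) = opO2 (Ds p) + (3 / 2 : ℂ) • (X 1 * Ds p) :=
  calc Ds (opO2 p)
    _ = X 1 * (Ds (weightedEuler weightO2 p) + Ds p) + I • (X 2 * (weightedEuler weightO2 p + p))
          + (I / 2) • Ds (X 0 * X 2 ^ 2 * p) := by
        rw [opO2_apply, map_add, map_smul, Ds_X_one_mul, map_add]
    _ = X 1 * (weightedEuler weightO2 (Ds p) + Ds p) + (I / 2) • (X 0 * X 2 ^ 2 * Ds p)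
          + (3 / 2 : ℂ) • (X 1 * Ds p) := by
        rw [Ds_weightedEuler_weightO2, Ds_X_zero_mul_X_two_sq_mul,
          smul_X_two_mul_weightedEuler_weightO2_add_self]
        simp only [mul_add, mul_sub, mul_smul_comm]
        module
    _ = opO2 (Ds p) + (3 / 2 : ℂ) • (X 1 * Ds p) := by rw [opO2_apply]

/-- `[D_s, O2] = (3/2) y ∘ D_s`, equivalently `D_s ∘ O2 = (O2 + (3/2) y) ∘ D_s`;
in particular `O2` preserves the kernel of `D_s`. -/
theorem symmetry_O2 :
    Ds * opO2 - opO2 * Ds = (3 / 2 : ℂ) • (My * Ds) ∧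
    Ds * opO2 = (opO2 + (3 / 2 : ℂ) • My) * Ds ∧
    ∀ p : V, Ds p = 0 → Ds (opO2 p) = 0 := by
  have hmul : Ds * opO2 = (opO2 + (3 / 2 : ℂ) • My) * Ds := LinearMap.ext Ds_opO2
  refine ⟨?_, hmul, fun p hp => ?_⟩
  · rw [hmul, add_mul, add_sub_cancel_left, smul_mul_assoc]
  · simp [Ds_opO2, hp]
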